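/- A finite-order orientation-preserving diffeomorphism h of the 2-sphere with h ≠ id and h² = id has exactly two fixed points. -/

import Mathlib

open Metric Manifold Filter Topology

abbrev E3 := EuclideanSpace ℝ (Fin 3)
abbrev S2 := sphere (0 : E3) 1

/-- complex coordinate of the first two real coordinates -/
noncomputable def xi (x : E3) : ℂ := ⟨x 0, x 1⟩

lemma continuous_xi : Continuous xi := by
  have : xi = fun x : E3 => (x 0 : ℂ) + (x 1 : ℂ) * Complex.I := by
    funext x; apply Complex.ext <;> simp [xi]
  rw [this]; fun_prop

/-- The vector `(u, w)` lies in the tautological line over `x`. -/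
def InL (x : E3) (u w : ℂ) : Prop :=
  u * xi x = w * (1 - x 2) ∧ u * (1 + x 2) = w * (starRingEnd ℂ) (xi x)

lemma sphere_eq (x : S2) : (x : E3) 0 ^ 2 + (x : E3) 1 ^ 2 + (x : E3) 2 ^ 2 = 1 := by
  have h := x.2
  rw [mem_sphere_zero_iff_norm, EuclideanSpace.norm_eq, Real.sqrt_eq_one] at h
  simpa [Fin.sum_univ_three] using h

lemma xi_mul_conj (x : S2) : xi x * (starRingEnd ℂ) (xi x) = (1 - (x : E3) 2) * (1 + (x : E3) 2) := by
  have h := sphere_eq x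
  apply Complex.ext <;> simp [xi]
  · nlinarith
  · ring

lemma InL.bloch {x : E3} {u w : ℂ} (h : InL x u w) :
    (u * (starRingEnd ℂ) u + w * (starRingEnd ℂ) w) * xi x = 2 * (starRingEnd ℂ) u * w ∧
    (u * (starRingEnd ℂ) u + w * (starRingEnd ℂ) w) * (x 2 : ℂ) =
      w * (starRingEnd ℂ) w - u * (starRingEnd ℂ) u := by
  obtain ⟨h1, h2⟩ := h
  have h1' := congrArg (starRingEnd ℂ) h1
  have h2' := congrArg (starRingEnd ℂ) h2
  simp only [map_mul, map_add, map_sub, map_one, Complex.conj_ofReal, Complex.conj_conj] at h1' h2'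
  constructor
  · linear_combination (starRingEnd ℂ) u * h1 - w * h2'
  · linear_combination (starRingEnd ℂ) u * h2 + w * h1'

lemma normpair {u w : ℂ} (h : ¬ (u = 0 ∧ w = 0)) :
    (u * (starRingEnd ℂ) u + w * (starRingEnd ℂ) w) ≠ 0 := by
  rw [Complex.mul_conj, Complex.mul_conj, ← Complex.ofReal_add]
  intro h0
  have h0 := Complex.ofReal_eq_zero.1 h0
  have hu := Complex.normSq_nonneg u
  have hw := Complex.normSq_nonneg w
  exact h ⟨Complex.normSq_eq_zero.1 (by linarith), Complex.normSq_eq_zero.1 (by linarith)⟩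

lemma InL.unique {x y : E3} {u w : ℂ} (h : ¬ (u = 0 ∧ w = 0)) (hx : InL x u w) (hy : InL y u w) :
    x = y := by
  have hn := normpair h
  obtain ⟨a1, a2⟩ := hx.bloch
  obtain ⟨b1, b2⟩ := hy.bloch
  have e1 : xi x = xi y := mul_left_cancel₀ hn (a1.trans b1.symm)
  have e2 : (x 2 : ℂ) = y 2 := mul_left_cancel₀ hn (a2.trans b2.symm)
  have e2 := Complex.ofReal_injective e2
  ext i
  fin_cases i
  · exact congrArg Complex.re e1
  · exact congrArg Complex.im e1
  · exact e2

/-- There is a continuous family of isomorphisms of lines `L_x → L_{φ x}`. -/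
def Good (φ : S2 → S2) : Prop :=
  ∃ a b c d : S2 → ℂ, Continuous a ∧ Continuous b ∧ Continuous c ∧ Continuous d ∧
    ∀ (x : S2) (u w : ℂ), ¬ (u = 0 ∧ w = 0) → InL x u w →
      ¬ (a x * u + b x * w = 0 ∧ c x * u + d x * w = 0) ∧
      InL (φ x) (a x * u + b x * w) (c x * u + d x * w)

lemma good_id : Good id := by
  refine ⟨fun _ => 1, fun _ => 0, fun _ => 0, fun _ => 1, by fun_prop, by fun_prop, by fun_prop,
    by fun_prop, fun x u w h hx => ?_⟩
  simpa using ⟨fun h1 h2 => h ⟨h1, h2⟩, hx⟩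

lemma Good.step {φ ψ : S2 → S2} (hψ : Continuous ψ) (hφ : Good φ)
    (hne : ∀ x, (ψ x : E3) ≠ - (φ x : E3)) : Good ψ := by
  obtain ⟨a, b, c, d, ha, hb, hc, hd, H⟩ := hφ
  let k : S2 → ℂ := fun x => xi (ψ x)
  let t : S2 → ℂ := fun x => ((ψ x : E3) 2 : ℂ)
  have hk : Continuous k := continuous_xi.comp (continuous_subtype_val.comp hψ)
  have ht : Continuous t := by
    have : Continuous fun x => (ψ x : E3) := continuous_subtype_val.comp hψ
    exact Complex.continuous_ofReal.comp
      ((EuclideanSpace.proj (𝕜 := ℝ) (2 : Fin 3)).continuous.comp this)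
  let kb : S2 → ℂ := fun x => (starRingEnd ℂ) (k x)
  have hkb : Continuous kb := Complex.continuous_conj.comp hk
  refine ⟨fun x => (1 - t x) * a x + kb x * c x, fun x => (1 - t x) * b x + kb x * d x,
    fun x => k x * a x + (1 + t x) * c x, fun x => k x * b x + (1 + t x) * d x,
    by fun_prop, by fun_prop, by fun_prop, by fun_prop, fun x u w h hx => ?_⟩
  obtain ⟨h0, h1⟩ := H x u w h hx
  set p := a x * u + b x * w with hp
  set q := c x * u + d x * w with hq
  have e1 : ((1 - t x) * a x + kb x * c x) * u + ((1 - t x) * b x + kb x * d x) * w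
      = (1 - t x) * p + kb x * q := by rw [hp, hq]; ring
  have e2 : (k x * a x + (1 + t x) * c x) * u + (k x * b x + (1 + t x) * d x) * w
      = k x * p + (1 + t x) * q := by rw [hp, hq]; ring
  have hs : k x * kb x = (1 - t x) * (1 + t x) := xi_mul_conj (ψ x)
  dsimp only
  rw [e1, e2]
  constructor
  · rintro ⟨z1, z2⟩
    apply hne x
    have hL : InL (- (ψ x : E3)) p q := by
      have hxi : xi (-(ψ x : E3)) = - k x := by
        apply Complex.ext <;> simp [xi, k]
      constructor
      · rw [hxi]
        have : (((-(ψ x : E3)) 2 : ℝ) : ℂ) = - t x := by simp [t]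
        rw [this]; linear_combination -z2
      · rw [hxi]
        have : (((-(ψ x : E3)) 2 : ℝ) : ℂ) = - t x := by simp [t]
        rw [this, map_neg]; linear_combination z1
    rw [← InL.unique h0 hL h1, neg_neg]
  · constructor
    · change _ * k x = _ * (1 - t x)
      linear_combination q * hs
    · change _ * (1 + t x) = _ * kb x
      linear_combination -p * hs

lemma good_of_homotopic (φ : C(S2, S2)) (h : φ.Homotopic (ContinuousMap.id _)) : Good φ := by
  obtain ⟨F⟩ := h.symm
  let γ : C(unitInterval, C(S2, S2)) := F.toContinuousMap.curry
  have hstep : ∀ s t, dist (γ s) (γ t) < 2 → Good (γ s) → Good (γ t) := by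
    intro s t hst hg
    refine hg.step (γ t).continuous fun x hx => ?_
    have h1 := (ContinuousMap.dist_apply_le_dist (f := γ s) (g := γ t) x).trans_lt hst
    rw [Subtype.dist_eq, hx, dist_eq_norm, sub_neg_eq_add, ← two_smul ℝ, norm_smul] at h1
    have := (γ s x).2
    rw [mem_sphere_zero_iff_norm] at this
    rw [this] at h1
    norm_num at h1
  have hloc : ∀ s, ∀ᶠ t in 𝓝 s, dist (γ s) (γ t) < 2 := by
    intro s
    have : Continuous fun t => dist (γ s) (γ t) := by fun_prop
    exact this.continuousAt.eventually (gt_mem_nhds (by simp))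
  have hclopen : IsClopen {t | Good (γ t)} := by
    constructor
    · rw [← isOpen_compl_iff, isOpen_iff_mem_nhds]
      intro s hs
      filter_upwards [hloc s] with t ht h2
      exact hs (hstep t s (by rwa [dist_comm]) h2)
    · rw [isOpen_iff_mem_nhds]
      intro s hs
      filter_upwards [hloc s] with t ht
      exact hstep s t ht hs
  have h0 : (0 : unitInterval) ∈ {t | Good (γ t)} := by
    have : (γ 0 : S2 → S2) = id := by funext x; simp [γ]
    simp only [Set.mem_ofPred_eq, this]; exact good_id
  have h1 : (1 : unitInterval) ∈ {t | Good (γ t)} := by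
    rw [hclopen.eq_univ ⟨0, h0⟩]; trivial
  have : (γ 1 : S2 → S2) = φ := by funext x; simp [γ]
  simpa [this] using h1

lemma exists_clog (Q : ℂ → ℂ) (hQ : Continuous Q) (hQ0 : ∀ z, Q z ≠ 0) :
    ∃ u : ℂ → ℂ, Continuous u ∧ ∀ z, Complex.exp (u z) = Q z := by
  obtain ⟨F, ⟨_, hF⟩, -⟩ := Complex.isCoveringMap_exp.existsUnique_continuousMap_lifts
    (f := ⟨fun z => (⟨Q z, hQ0 z⟩ : {z : ℂ // z ≠ 0}), by fun_prop⟩) (a₀ := 0)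
    (e₀ := Complex.log (Q 0)) (by simp [Complex.exp_log (hQ0 0)])
  refine ⟨F, F.continuous, fun z => ?_⟩
  have := congrFun hF z
  simpa using congrArg Subtype.val this

lemma winding_zero (Q a b : ℂ → ℂ) (m : ℤ) (R : ℝ) (hR : 0 < R) (hQ : Continuous Q)
    (hQ0 : ∀ z, Q z ≠ 0) (ha : ContinuousOn a {0}ᶜ) (hb : ContinuousOn b {0}ᶜ)
    (H : ∀ z, ‖z‖ = R → 0 < (a z).re ∧ 0 < (b z).re ∧ Q z * a z = z ^ m * b z) : m = 0 := by
  obtain ⟨u, hu, hue⟩ := exists_clog Q hQ hQ0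
  let w : ℝ → ℂ := fun t => Complex.exp (Real.log R + t * Complex.I)
  have hw : Continuous w := by fun_prop
  have hwn : ∀ t, ‖w t‖ = R := fun t => by simp [w, Complex.norm_exp, Real.exp_log hR]
  have hw0 : ∀ t, w t ∈ ({0}ᶜ : Set ℂ) := fun t => Complex.exp_ne_zero _
  let F : ℝ → ℂ := fun t => u (w t) + Complex.log (a (w t)) - Complex.log (b (w t))
    - m * (Real.log R + t * Complex.I)
  have hF : Continuous F := by
    refine ((((hu.comp hw).add ?_).sub ?_).sub (by fun_prop))
    · exact (ha.comp_continuous hw hw0).clog (fun t => Or.inl (H _ (hwn t)).1)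
    · exact (hb.comp_continuous hw hw0).clog (fun t => Or.inl (H _ (hwn t)).2.1)
  have hF1 : ∀ t, Complex.exp (F t) = 1 := by
    intro t
    obtain ⟨h1, h2, h3⟩ := H _ (hwn t)
    have ha0 : a (w t) ≠ 0 := fun h => by simp [h] at h1
    have hb0 : b (w t) ≠ 0 := fun h => by simp [h] at h2
    simp only [F]
    rw [Complex.exp_sub, Complex.exp_sub, Complex.exp_add, hue, Complex.exp_log ha0,
      Complex.exp_log hb0, Complex.exp_int_mul, h3]
    change (w t ^ m * b (w t)) / b (w t) / (w t ^ m) = 1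
    have := zpow_ne_zero m (hw0 t)
    field_simp
  have key := Complex.isCoveringMap_exp.eq_of_comp_eq hF
    (continuous_const (y := F 0)) (by
      funext t; simp [hF1]) 0 rfl
  have h2 := congrFun key (2 * Real.pi)
  have hww : w (2 * Real.pi) = w 0 := by
    simp only [w]
    rw [Complex.exp_eq_exp_iff_exists_int]
    exact ⟨1, by push_cast; ring⟩
  simp only [F, hww] at h2
  have h3 : (m : ℂ) * (2 * Real.pi * Complex.I) = 0 := by
    push_cast at h2
    linear_combination -h2
  simpa [Real.pi_ne_zero] using h3

/-- inverse stereographic projection, ambient version -/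
noncomputable def sigA (z : ℂ) : E3 :=
  !₂[2 * z.re / (1 + Complex.normSq z), 2 * z.im / (1 + Complex.normSq z),
    (Complex.normSq z - 1) / (1 + Complex.normSq z)]

lemma nsq_pos (z : ℂ) : 0 < 1 + Complex.normSq z := by
  have := Complex.normSq_nonneg z; linarith

lemma sigA_mem (z : ℂ) : sigA z ∈ sphere (0 : E3) 1 := by
  rw [mem_sphere_zero_iff_norm, EuclideanSpace.norm_eq, Real.sqrt_eq_one]
  have := (nsq_pos z).ne'
  simp [Fin.sum_univ_three, sigA]
  field_simp
  rw [Complex.normSq_apply]; ring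

lemma contDiff_sigA : ContDiff ℝ 1 sigA := by
  have hn : ContDiff ℝ 1 (fun z : ℂ => Complex.normSq z) := by
    have : (fun z : ℂ => Complex.normSq z) = fun z => Complex.reCLM z * Complex.reCLM z
      + Complex.imCLM z * Complex.imCLM z := by funext z; simp [Complex.normSq_apply]
    rw [this]; fun_prop
  have hr : ContDiff ℝ 1 (fun z : ℂ => z.re) := Complex.reCLM.contDiff
  have hi : ContDiff ℝ 1 (fun z : ℂ => z.im) := Complex.imCLM.contDiff
  rw [contDiff_euclidean]
  intro i
  fin_cases i
  · exact ContDiff.div (by fun_prop) (by fun_prop) (fun z => (nsq_pos z).ne')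
  · exact ContDiff.div (by fun_prop) (by fun_prop) (fun z => (nsq_pos z).ne')
  · exact ContDiff.div (by fun_prop) (by fun_prop) (fun z => (nsq_pos z).ne')

/-- inverse stereographic projection -/
noncomputable def sig (z : ℂ) : S2 := ⟨sigA z, sigA_mem z⟩

lemma continuous_sig : Continuous sig :=
  Continuous.subtype_mk contDiff_sigA.continuous _

/-- the north pole -/
noncomputable def NP : S2 := ⟨!₂[0, 0, 1], by
  rw [mem_sphere_zero_iff_norm, EuclideanSpace.norm_eq, Real.sqrt_eq_one]
  simp [Fin.sum_univ_three]⟩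

/-- stereographic projection -/
noncomputable def tau (x : E3) : ℂ := xi x / (1 - x 2)

lemma InL_sig (z : ℂ) : InL (sig z) 1 z := by
  have h := (nsq_pos z).ne'
  have e1 : xi (sig z) = 2 * z / (1 + Complex.normSq z : ℝ) := by
    apply Complex.ext
    · rw [Complex.div_ofReal_re]; simp [xi, sig, sigA]
    · rw [Complex.div_ofReal_im]; simp [xi, sig, sigA]
  have e2 : (((sig z : E3) 2 : ℝ) : ℂ) = ((Complex.normSq z : ℂ) - 1) / (1 + Complex.normSq z : ℝ) := by
    simp [sig, sigA]
  have h' : ((1 + Complex.normSq z : ℝ) : ℂ) ≠ 0 := Complex.ofReal_ne_zero.2 h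
  have hz : z * (starRingEnd ℂ) z = Complex.normSq z := Complex.mul_conj z
  constructor
  · rw [e1, e2]; field_simp; push_cast; ring
  · rw [e1, e2]
    simp only [map_div₀, map_mul, Complex.conj_ofReal, map_ofNat]
    field_simp; push_cast; linear_combination -2 * hz

lemma InL_NP : InL NP 0 1 := by
  constructor
  · simp [NP]
  · simp only [NP, xi]; simp; apply Complex.ext <;> simp

lemma eq_NP {x : S2} {w : ℂ} (hw : w ≠ 0) (h : InL x 0 w) : x = NP := by
  have h2 : InL NP 0 w := by
    obtain ⟨h1, h2⟩ := InL_NP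
    exact ⟨by linear_combination w * h1, by linear_combination w * h2⟩
  exact Subtype.ext (InL.unique (by simp [hw]) h h2)

lemma ne_NP {x : S2} (hx : x ≠ NP) : (1 - ((x : E3) 2 : ℂ)) ≠ 0 := by
  intro h
  have h2 : (x : E3) 2 = 1 := by
    have : ((1 - (x : E3) 2 : ℝ) : ℂ) = 0 := by push_cast; exact h
    have := Complex.ofReal_eq_zero.1 this
    linarith
  have h3 := sphere_eq x
  rw [h2] at h3
  apply hx
  apply Subtype.ext
  ext i
  fin_cases i
  · change (x : E3) 0 = 0; nlinarith [sq_nonneg ((x : E3) 0), sq_nonneg ((x : E3) 1)]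
  · change (x : E3) 1 = 0; nlinarith [sq_nonneg ((x : E3) 0), sq_nonneg ((x : E3) 1)]
  · exact h2

lemma InL_tau {x : S2} (hx : x ≠ NP) : InL x 1 (tau x) := by
  have h := ne_NP hx
  have h2 := xi_mul_conj x
  constructor
  · rw [tau]; field_simp
  · rw [tau]; field_simp; linear_combination -h2

lemma sig_tau {x : S2} (hx : x ≠ NP) : sig (tau x) = x :=
  Subtype.ext (InL.unique (by simp) (InL_sig _) (InL_tau hx))

lemma sig_ne_NP (z : ℂ) : sig z ≠ NP := by
  intro h
  have h1 := InL_sig z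
  have h2 := InL_NP
  rw [h] at h1
  have h3 := h1.2
  have h5 : xi NP = 0 := by apply Complex.ext <;> simp [xi, NP]
  rw [h5] at h3
  simp [NP] at h3

lemma tau_of_InL {x : S2} (hx : x ≠ NP) {u w : ℂ} (h : InL x u w) : w = u * tau x := by
  have h1 := ne_NP hx
  rw [tau]; field_simp; exact h.1.symm

lemma tau_sig (z : ℂ) : tau (sig z) = z := by
  simpa using (tau_of_InL (sig_ne_NP z) (InL_sig z)).symm

lemma sig_injective : Function.Injective sig := fun x y h => by
  rw [← tau_sig x, ← tau_sig y, h]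

lemma tendsto_inv_cc : Tendsto (fun z : ℂ => z⁻¹) (cocompact ℂ) (𝓝 0) := by
  rw [← Metric.cobounded_eq_cocompact]; exact tendsto_inv₀_cobounded

lemma ev_ne_zero : ∀ᶠ z : ℂ in cocompact ℂ, z ≠ 0 := by
  rw [← Metric.cobounded_eq_cocompact]; exact Bornology.eventually_ne_cobounded 0

lemma tendsto_sig : Tendsto sig (cocompact ℂ) (𝓝 NP) := by
  rw [tendsto_subtype_rng]
  let J : ℂ → E3 := fun w => !₂[(sigA w) 0, -(sigA w) 1, -(sigA w) 2]
  have hJ : Continuous J := by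
    have h0 : ∀ i, Continuous fun w => sigA w i := fun i =>
      (EuclideanSpace.proj (𝕜 := ℝ) i).continuous.comp contDiff_sigA.continuous
    have h1 := h0 0
    have h2 := h0 1
    have h3 := h0 2
    refine (PiLp.continuous_toLp 2 _).comp (continuous_pi fun i => ?_)
    fin_cases i
    · exact h1
    · exact h2.neg
    · exact h3.neg
  have hJ0 : J 0 = NP := by
    ext i; fin_cases i <;> simp [J, NP, sigA]
  rw [← hJ0]
  refine ((hJ.tendsto 0).comp tendsto_inv_cc).congr' ?_
  filter_upwards [ev_ne_zero] with z hz
  have h1 := (nsq_pos z).ne'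
  have h2 : Complex.normSq z ≠ 0 := by simpa using hz
  have h3 : Complex.normSq z + 1 ≠ 0 := by rwa [add_comm]
  ext i
  fin_cases i <;> simp [J, sig, sigA] <;> field_simp <;> ring

lemma exists_data {h : S2 → S2} (hg : Good h) : ∃ (c0 c1 : ℂ → ℂ) (e0 e1 : ℂ),
    Continuous c0 ∧ Continuous c1 ∧
    (∀ z, ¬ (c0 z = 0 ∧ c1 z = 0) ∧ InL (h (sig z)) (c0 z) (c1 z)) ∧
    ¬ (e0 = 0 ∧ e1 = 0) ∧ InL (h NP) e0 e1 ∧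
    Tendsto (fun z => c0 z / z) (cocompact ℂ) (𝓝 e0) ∧
    Tendsto (fun z => c1 z / z) (cocompact ℂ) (𝓝 e1) := by
  obtain ⟨a, b, c, d, ha, hb, hc, hd, H⟩ := hg
  have hs := continuous_sig
  have hinv : Tendsto (fun z : ℂ => z⁻¹) (cocompact ℂ) (𝓝 0) := by
    rw [← Metric.cobounded_eq_cocompact]; exact tendsto_inv₀_cobounded
  have hne : ∀ᶠ z : ℂ in cocompact ℂ, z ≠ 0 := by
    rw [← Metric.cobounded_eq_cocompact]; exact Bornology.eventually_ne_cobounded 0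
  have main : ∀ p q : S2 → ℂ, Continuous p → Continuous q →
      Tendsto (fun z => (p (sig z) * 1 + q (sig z) * z) / z) (cocompact ℂ)
        (𝓝 (p NP * 0 + q NP * 1)) := by
    intro p q hp hq
    have h1 := ((hp.tendsto NP).comp tendsto_sig).mul hinv
    have h2 := ((hq.tendsto NP).comp tendsto_sig).mul_const 1
    refine (h1.add h2).congr' ?_
    filter_upwards [hne] with z hz
    simp only [Function.comp]
    field_simp
  refine ⟨fun z => a (sig z) * 1 + b (sig z) * z, fun z => c (sig z) * 1 + d (sig z) * z,
    a NP * 0 + b NP * 1, c NP * 0 + d NP * 1, by fun_prop, by fun_prop,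
    fun z => H _ _ _ (by simp) (InL_sig z), (H NP 0 1 (by simp) InL_NP).1,
    (H NP 0 1 (by simp) InL_NP).2, main a b ha hb, main c d hc hd⟩

lemma ratio_tendsto {f : ℂ → ℂ} {D : ℂ →L[ℝ] ℂ} {z0 : ℂ} (hf : HasFDerivAt f D z0)
    (h0 : f z0 = 0) (K : ℝ) (hK : ∀ w, ‖w‖ ≤ K * ‖D w‖) :
    Tendsto (fun z => f z / D (z - z0)) (𝓝[≠] z0) (𝓝 1) := by
  have hD0 : ∀ w, D w = 0 → w = 0 := fun w hw => by
    have := hK w; simpa [hw] using this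
  have h1 : (fun z => f z - f z0 - D (z - z0)) =o[𝓝 z0] fun z => z - z0 := hf.isLittleO
  have h2 : (fun z => z - z0) =O[𝓝 z0] fun z => D (z - z0) :=
    Asymptotics.IsBigO.of_bound K (Eventually.of_forall fun z => hK _)
  have h3 := (h1.trans_isBigO h2).mono (nhdsWithin_le_nhds (s := {z0}ᶜ))
  have h4 := h3.tendsto_div_nhds_zero
  have h5 := h4.const_add 1
  rw [add_zero] at h5
  refine h5.congr' ?_
  filter_upwards [self_mem_nhdsWithin] with z hz
  have : D (z - z0) ≠ 0 := fun h => hz (sub_eq_zero.1 (hD0 _ h))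
  rw [h0]; field_simp; ring

lemma linear_invol (D : ℂ →L[ℝ] ℂ) (hD : ∀ w, D (D w) = w) :
    (∀ w, D w = w) ∨ (∀ w, D w = -w) ∨
      ∃ α β : ℂ, ‖α‖ < ‖β‖ ∧ ∀ w, D w = α * w + β * (starRingEnd ℂ) w := by
  have hrep : ∀ w : ℂ, D w = w.re * D 1 + w.im * D Complex.I := by
    intro w
    conv_lhs => rw [show w = w.re • (1 : ℂ) + w.im • Complex.I by simp]
    rw [map_add, map_smul, map_smul]; simp
  obtain ⟨α, β, hab⟩ : ∃ α β : ℂ, ∀ w, D w = α * w + β * (starRingEnd ℂ) w := by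
    refine ⟨(D 1 - Complex.I * D Complex.I) / 2, (D 1 + Complex.I * D Complex.I) / 2, fun w => ?_⟩
    rw [hrep]
    have h1 : (starRingEnd ℂ) w = w.re - w.im * Complex.I := by
      apply Complex.ext <;> simp
    have h2 : w = w.re + w.im * Complex.I := (Complex.re_add_im w).symm
    generalize w.re = a at *
    generalize w.im = b at *
    rw [h1, h2]
    linear_combination (b * D Complex.I) * Complex.I_sq
  have e1 := hD 1
  have e2 := hD Complex.I
  simp only [hab, map_add, map_mul, map_one, Complex.conj_I, map_neg, neg_neg, mul_one] at e1 e2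
  have f1 : α ^ 2 + β * (starRingEnd ℂ) β = 1 := by
    linear_combination e1 / 2 - Complex.I / 2 * e2 + (α ^ 2 - α * β + β * (starRingEnd ℂ) β - β * (starRingEnd ℂ) α - 1) / 2 * Complex.I_sq
  have f2 : β * (α + (starRingEnd ℂ) α) = 0 := by
    linear_combination e1 - f1
  rcases mul_eq_zero.1 f2 with hb | hre
  · have : (α - 1) * (α + 1) = 0 := by rw [hb] at f1; linear_combination f1
    rcases mul_eq_zero.1 this with h | h
    · left; intro w; rw [hab, hb, sub_eq_zero.1 h]; ring
    · right; left; intro w; rw [hab, hb, eq_neg_of_add_eq_zero_left h]; ring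
  · right; right
    refine ⟨α, β, ?_, hab⟩
    have h3 : α * (starRingEnd ℂ) α + 1 = β * (starRingEnd ℂ) β := by
      linear_combination -f1 + α * hre
    rw [Complex.mul_conj, Complex.mul_conj] at h3
    have h4 : Complex.normSq α + 1 = Complex.normSq β := by exact_mod_cast h3
    rw [Complex.normSq_eq_norm_sq, Complex.normSq_eq_norm_sq] at h4
    exact lt_of_pow_lt_pow_left₀ 2 (norm_nonneg _) (by linarith)

/-- local stereographic form of `h` -/
noncomputable def gg (h : S2 → S2) (z : ℂ) : ℂ := tau (h (sig z))

lemma contDiffAt_tau {x : S2} (hx : x ≠ NP) : ContDiffAt ℝ 1 tau (x : E3) := by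
  have : tau = fun x : E3 => (Complex.ofRealCLM (EuclideanSpace.proj (𝕜 := ℝ) (0 : Fin 3) x)
      + Complex.ofRealCLM (EuclideanSpace.proj (𝕜 := ℝ) (1 : Fin 3) x) * Complex.I) /
      (1 - Complex.ofRealCLM (EuclideanSpace.proj (𝕜 := ℝ) (2 : Fin 3) x)) := by
    funext x
    rw [tau]
    congr 1
    apply Complex.ext <;> simp [xi]
  rw [this]
  simp only [div_eq_mul_inv]
  refine ContDiffAt.mul ?_ (ContDiffAt.inv ?_ (ne_NP hx))
  · exact ContDiff.contDiffAt (by fun_prop)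
  · exact ContDiff.contDiffAt (by fun_prop)

lemma ev_ne_NP {h : S2 → S2} (hc : Continuous h) {z0 : ℂ} (h0 : h (sig z0) = sig z0) : ∀ᶠ z in 𝓝 z0, h (sig z) ≠ NP := by
  have : Continuous fun z => h (sig z) := hc.comp continuous_sig
  exact this.continuousAt.eventually_ne (by rw [h0]; exact sig_ne_NP z0)


lemma gg_local {h : S2 → S2} (hc : Continuous h)
    (hsm : ContDiff ℝ 1 (fun z : ℂ => (h (sig z) : E3))) (hinv : ∀ x, h (h x) = x)
    {z0 : ℂ} (h0 : h (sig z0) = sig z0) :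
    gg h z0 = z0 ∧ (∀ᶠ z in 𝓝 z0, gg h (gg h z) = z) ∧
    ∃ D : ℂ →L[ℝ] ℂ, HasStrictFDerivAt (gg h) D z0 ∧ ∀ w, D (D w) = w := by
  have g0 : gg h z0 = z0 := by rw [gg, h0, tau_sig]
  have ginv : ∀ᶠ z in 𝓝 z0, gg h (gg h z) = z := by
    filter_upwards [ev_ne_NP hc h0] with z hz
    rw [gg, gg, sig_tau hz, hinv, tau_sig]
  have hne : h (sig z0) ≠ NP := by rw [h0]; exact sig_ne_NP z0
  have hcd : ContDiffAt ℝ 1 (gg h) z0 := (contDiffAt_tau hne).comp z0 hsm.contDiffAt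
  have hs := hcd.hasStrictFDerivAt (by norm_num)
  refine ⟨g0, ginv, _, hs, fun w => ?_⟩
  have h1 : HasFDerivAt (fun z => gg h (gg h z)) _ z0 :=
    HasFDerivAt.comp z0 (g := gg h) (by rw [g0]; exact hs.hasFDerivAt) hs.hasFDerivAt
  have h2 : HasFDerivAt (fun z : ℂ => z) _ z0 := h1.congr_of_eventuallyEq
    (by filter_upwards [ginv] with z hz using hz.symm)
  have := h2.unique (hasFDerivAt_id z0)
  exact congrArg (fun L : ℂ →L[ℝ] ℂ => L w) this

lemma InL.eq_sig {x : S2} {u w z0 : ℂ} (hx : InL x u w) (hn : ¬ (u = 0 ∧ w = 0)) (h : w = z0 * u) :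
    x = sig z0 := by
  refine Subtype.ext (InL.unique hn hx ?_)
  obtain ⟨h1, h2⟩ := InL_sig z0
  rw [h]
  exact ⟨by linear_combination u * h1, by linear_combination u * h2⟩

lemma exists_radius {P : ℂ → Prop} (hP : ∀ᶠ z in cocompact ℂ, P z) :
    ∃ R : ℝ, 0 < R ∧ ∀ z, R ≤ ‖z‖ → P z := by
  rw [← Metric.cobounded_eq_cocompact, ← comap_norm_atTop] at hP
  have hP := Filter.eventually_comap.1 hP
  obtain ⟨R, hR⟩ := Filter.eventually_atTop.1 hP
  exact ⟨max R 1, by positivity, fun z hz => hR ‖z‖ (le_trans (le_max_left _ _) hz) z rfl⟩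

lemma ev_re_pos {l : Filter ℂ} {f : ℂ → ℂ} (hf : Tendsto f l (𝓝 1)) : ∀ᶠ z in l, 0 < (f z).re :=
  ((Complex.continuous_re.tendsto 1).comp hf).eventually (lt_mem_nhds (by simp))

lemma no_reflection {h : S2 → S2} (hc : Continuous h)
    (hsm : ContDiff ℝ 1 (fun z : ℂ => (h (sig z) : E3))) (hinv : ∀ x, h (h x) = x)
    (hg : Good h) {z0 : ℂ} (h0 : h (sig z0) = sig z0) {D : ℂ →L[ℝ] ℂ}
    (hD : HasStrictFDerivAt (gg h) D z0) (hDD : ∀ w, D (D w) = w) (α β : ℂ) (hab : ‖α‖ < ‖β‖)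
    (hDab : ∀ w, D w = α * w + β * (starRingEnd ℂ) w) : False := by
  obtain ⟨c0, c1, e0, e1, hc0, hc1, hL, he, heL, ht0, ht1⟩ := exists_data hg
  have hinj : ∀ x, h x = sig z0 → x = sig z0 := fun x hx => by rw [← hinv x, hx, h0]
  have g0 : gg h z0 = z0 := (gg_local hc hsm hinv h0).1
  have hβ : β ≠ 0 := by
    intro hb; rw [hb, norm_zero] at hab; exact absurd hab (not_lt.2 (norm_nonneg _))
  let r : ℂ → ℂ := fun z => c1 z - z0 * c0 z
  have hrc : Continuous r := by fun_prop
  have hr0 : ∀ z, r z = 0 → z = z0 := by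
    intro z hz
    have := (hL z).2.eq_sig (hL z).1 (sub_eq_zero.1 hz)
    exact sig_injective (hinj _ this)
  have hE : e1 - z0 * e0 ≠ 0 := by
    intro hz
    have := heL.eq_sig he (sub_eq_zero.1 hz)
    exact sig_ne_NP z0 (hinj _ this).symm
  set E := e1 - z0 * e0 with hEdef
  have hc00 : c0 z0 ≠ 0 := by
    intro hz
    have h1 := hL z0
    rw [hz] at h1
    have h2 : c1 z0 ≠ 0 := fun h => h1.1 ⟨rfl, h⟩
    have := eq_NP h2 h1.2
    rw [h0] at this
    exact sig_ne_NP z0 this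
  have hDne : ∀ w, w ≠ 0 → D w ≠ 0 := by
    intro w hw h; apply hw; rw [← hDD w, h, map_zero]
  have hratio : Tendsto (fun z => (gg h z - z0) / D (z - z0)) (𝓝[≠] z0) (𝓝 1) := by
    refine ratio_tendsto (hD.hasFDerivAt.sub_const z0) (by rw [g0, sub_self]) ‖D‖ fun w => ?_
    conv_lhs => rw [← hDD w]
    exact D.le_opNorm _
  let Q : ℂ → ℂ := Function.update (fun z => r z / D (z - z0)) z0 (c0 z0)
  have hQc : Continuous Q := by
    rw [continuous_iff_continuousAt]
    intro z
    by_cases hz : z = z0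
    · subst hz
      rw [continuousAt_update_same]
      have h1 := ((hc0.tendsto z).mono_left nhdsWithin_le_nhds).mul hratio
      rw [mul_one] at h1
      refine h1.congr' ?_
      filter_upwards [(ev_ne_NP hc h0).filter_mono nhdsWithin_le_nhds] with w hw
      have h2 := tau_of_InL hw (hL w).2
      simp only [r]
      rw [h2, gg]; ring
    · rw [continuousAt_update_of_ne hz]
      exact hrc.continuousAt.div (by fun_prop) (hDne _ (sub_ne_zero.2 hz))
  have hQ0 : ∀ z, Q z ≠ 0 := by
    intro z
    by_cases hz : z = z0
    · subst hz; simpa [Q] using hc00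
    · simp only [Q, Function.update_of_ne hz]
      exact div_ne_zero (fun h => hz (hr0 z h)) (hDne _ (sub_ne_zero.2 hz))
  let b : ℂ → ℂ := fun w => r (z0 + w) / (w * E) / (Complex.normSq w : ℂ)
  let a : ℂ → ℂ := fun w => D w / (β * (starRingEnd ℂ) w)
  have hrlim : Tendsto (fun z => r z / z) (cocompact ℂ) (𝓝 E) :=
    (ht1.sub (ht0.const_mul z0)).congr fun z => by simp only [r]; ring
  have hshift : Tendsto (fun w : ℂ => z0 + w) (cocompact ℂ) (cocompact ℂ) :=
    (Homeomorph.addLeft z0).isClosedEmbedding.tendsto_cocompact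
  have hblim : Tendsto (fun w => r (z0 + w) / (w * E)) (cocompact ℂ) (𝓝 1) := by
    have h1 := (hrlim.comp hshift).mul ((tendsto_inv_cc.const_mul z0).add_const 1)
    have h2 := h1.div_const E
    rw [mul_zero, zero_add, mul_one, div_self hE] at h2
    refine h2.congr' ?_
    filter_upwards [ev_ne_zero, hshift.eventually ev_ne_zero] with w hw hw2
    simp only [Function.comp]
    field_simp
    
  obtain ⟨R, hR, hR2⟩ := exists_radius (ev_re_pos hblim)
  have := winding_zero (fun w => Q (z0 + w) * β / E) a b 2 R hR (by fun_prop)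
    (fun w => div_ne_zero (mul_ne_zero (hQ0 _) hβ) hE) ?_ ?_ ?_
  · norm_num at this
  · intro w hw
    have hw : w ≠ 0 := hw
    refine ContinuousAt.continuousWithinAt (ContinuousAt.div (by fun_prop) ?_ ?_)
    · exact (continuous_const.mul Complex.continuous_conj).continuousAt
    · simp [hβ, hw]
  · intro w hw
    have hw : w ≠ 0 := hw
    refine ContinuousAt.continuousWithinAt (ContinuousAt.div (ContinuousAt.div ?_ (by fun_prop) ?_) ?_ ?_)
    · exact (hrc.comp (continuous_const.add continuous_id)).continuousAt
    · simp [hE, hw]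
    · exact (Complex.continuous_ofReal.comp Complex.continuous_normSq).continuousAt
    · simp [hw]
  · intro w hwR
    have hw : w ≠ 0 := by rw [← norm_pos_iff, hwR]; exact hR
    have hwc : (starRingEnd ℂ) w ≠ 0 := by simpa using hw
    refine ⟨?_, ?_, ?_⟩
    · have h1 : a w = 1 + α * w / (β * (starRingEnd ℂ) w) := by
        simp only [a, hDab]; field_simp; ring
      have h2 : ‖α * w / (β * (starRingEnd ℂ) w)‖ < 1 := by
        rw [norm_div, norm_mul, norm_mul, RCLike.norm_conj, div_lt_one (by positivity)]
        have : 0 < ‖w‖ := norm_pos_iff.2 hw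
        gcongr
      rw [h1, Complex.add_re, Complex.one_re]
      have h3 := Complex.abs_re_le_norm (α * w / (β * (starRingEnd ℂ) w))
      have := (abs_lt.1 (h3.trans_lt h2)).1
      linarith
    · simp only [b]
      rw [Complex.div_ofReal_re]
      exact div_pos (hR2 w hwR.ge) (Complex.normSq_pos.2 hw)
    · have hQw : Q (z0 + w) = r (z0 + w) / D w := by
        simp only [Q]
        rw [Function.update_of_ne (by simpa using hw)]
        simp
      have hDw := hDne w hw
      simp only [a, b, hQw]
      rw [← Complex.mul_conj]
      have : w ^ (2 : ℤ) = w * w := by rw [zpow_ofNat, sq]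
      rw [this]
      field_simp

lemma fixed_dichotomy {h : S2 → S2} (hc : Continuous h)
    (hsm : ContDiff ℝ 1 (fun z : ℂ => (h (sig z) : E3))) (hinv : ∀ x, h (h x) = x)
    (hg : Good h) {z0 : ℂ} (h0 : h (sig z0) = sig z0) :
    (∀ᶠ z in 𝓝 z0, h (sig z) = sig z) ∨
    ((∀ᶠ z in 𝓝 z0, h (sig z) = sig z → z = z0) ∧
      Tendsto (fun z => (gg h z - z) / (z - z0)) (𝓝[≠] z0) (𝓝 (-2))) := by
  obtain ⟨g0, ginv, D, hD, hDD⟩ := gg_local hc hsm hinv h0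
  have hstrict : ∀ᶠ p : ℂ × ℂ in 𝓝 (z0, z0),
      ‖gg h p.1 - gg h p.2 - D (p.1 - p.2)‖ ≤ 1 / 2 * ‖p.1 - p.2‖ :=
    hD.isLittleO.def (by norm_num)
  rcases linear_invol D hDD with hid | hneg | ⟨α, β, hab, hDab⟩
  · left
    have hcg : ContinuousAt (fun z => (z, gg h z)) z0 :=
      continuousAt_id.prodMk hD.hasFDerivAt.continuousAt
    have h1 := hcg.eventually (by simpa [g0] using hstrict)
    filter_upwards [h1, ginv, ev_ne_NP hc h0] with z hz hgz hne
    simp only [hgz, hid] at hz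
    have e : gg h z - z - (z - gg h z) = 2 * (gg h z - z) := by ring
    rw [e, norm_mul, norm_sub_rev z] at hz
    norm_num at hz
    have h3 : ‖gg h z - z‖ = 0 := by linarith [norm_nonneg (gg h z - z)]
    have h4 : gg h z = z := sub_eq_zero.1 (norm_eq_zero.1 h3)
    rw [← sig_tau hne]
    exact congrArg sig h4
  · right
    constructor
    · have hcg : ContinuousAt (fun z : ℂ => (z, z0)) z0 :=
        continuousAt_id.prodMk continuousAt_const
      have h1 := hcg.eventually hstrict
      filter_upwards [h1] with z hz hfix
      have : gg h z = z := by rw [gg, hfix, tau_sig]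
      simp only [this, g0, hneg] at hz
      have e : z - z0 - -(z - z0) = 2 * (z - z0) := by ring
      rw [e, norm_mul] at hz
      norm_num at hz
      have h3 : ‖z - z0‖ = 0 := by linarith [norm_nonneg (z - z0)]
      exact sub_eq_zero.1 (norm_eq_zero.1 h3)
    · have h1 : HasFDerivAt (fun z => gg h z - z) (D - ContinuousLinearMap.id ℝ ℂ) z0 :=
        hD.hasFDerivAt.sub (hasFDerivAt_id z0)
      have h2 : ∀ w, (D - ContinuousLinearMap.id ℝ ℂ) w = -2 * w := fun w => by
        simp [hneg]; ring
      have h3 := ratio_tendsto h1 (by rw [g0, sub_self]) 1 (fun w => by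
        rw [h2, norm_mul]; norm_num; linarith [norm_nonneg w])
      have h4 := h3.const_mul (-2)
      rw [mul_one] at h4
      refine h4.congr fun z => ?_
      rw [h2]
      by_cases hz : z - z0 = 0
      · simp [hz]
      · field_simp
  · exact (no_reflection hc hsm hinv hg h0 hD hDD α β hab hDab).elim

lemma factor_zeros (q : ℂ → ℂ) (hq : Continuous q) (F : Finset ℂ) (hF : ∀ z, q z = 0 ↔ z ∈ F)
    (hd : ∀ a ∈ F, ∃ d, d ≠ 0 ∧ Tendsto (fun z => q z / (z - a)) (𝓝[≠] a) (𝓝 d)) :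
    ∃ Q : ℂ → ℂ, Continuous Q ∧ (∀ z, Q z ≠ 0) ∧ ∀ z, q z = Q z * ∏ a ∈ F, (z - a) := by
  classical
  have hd' : ∀ a, ∃ d, a ∈ F → d ≠ 0 ∧ Tendsto (fun z => q z / (z - a)) (𝓝[≠] a) (𝓝 d) := by
    intro a
    by_cases ha : a ∈ F
    · obtain ⟨d, h⟩ := hd a ha; exact ⟨d, fun _ => h⟩
    · exact ⟨0, fun h => absurd h ha⟩
  choose d hd using hd'
  let Q : ℂ → ℂ := fun z => if z ∈ F then d z / ∏ b ∈ F.erase z, (z - b) else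
    q z / ∏ b ∈ F, (z - b)
  have hprod : ∀ z, z ∉ F → ∏ b ∈ F, (z - b) ≠ 0 := fun z hz =>
    Finset.prod_ne_zero_iff.2 fun b hb => sub_ne_zero.2 fun h => hz (h ▸ hb)
  have herase : ∀ z, ∏ b ∈ F.erase z, (z - b) ≠ 0 := fun z =>
    Finset.prod_ne_zero_iff.2 fun b hb => sub_ne_zero.2 fun h => by simp [h] at hb
  refine ⟨Q, ?_, ?_, ?_⟩
  · rw [continuous_iff_continuousAt]
    intro z
    by_cases hz : z ∈ F
    · rw [continuousAt_iff_punctured_nhds]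
      have h1 := (hd z hz).2
      have h2 : Continuous fun w => ∏ b ∈ F.erase z, (w - b) := by fun_prop
      have h3 := h1.div ((h2.tendsto z).mono_left nhdsWithin_le_nhds) (herase z)
      have hQz : Q z = d z / ∏ b ∈ F.erase z, (z - b) := by simp only [Q, if_pos hz]
      rw [hQz]
      refine h3.congr' ?_
      have h4 : ∀ᶠ w in 𝓝 z, w ∉ F.erase z :=
        (F.erase z).finite_toSet.isClosed.isOpen_compl.mem_nhds (by simp)
      filter_upwards [self_mem_nhdsWithin, h4.filter_mono nhdsWithin_le_nhds] with w hw hw2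
      have hwz : w ≠ z := hw
      have hwF : w ∉ F := fun h => hw2 (Finset.mem_erase.2 ⟨hwz, h⟩)
      simp only [Q, if_neg hwF, Pi.div_apply]
      rw [← Finset.mul_prod_erase F _ hz, div_div]
    · have h4 : ∀ᶠ w in 𝓝 z, w ∉ F := F.finite_toSet.isClosed.isOpen_compl.mem_nhds (by simpa)
      have h5 : ContinuousAt (fun w => q w / ∏ b ∈ F, (w - b)) z :=
        hq.continuousAt.div (by fun_prop) (hprod z hz)
      refine h5.congr ?_
      filter_upwards [h4] with w hw
      simp only [Q, if_neg hw]
  · intro z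
    by_cases hz : z ∈ F
    · simp only [Q, if_pos hz]; exact div_ne_zero (hd z hz).1 (herase z)
    · simp only [Q, if_neg hz]; exact div_ne_zero (fun h => hz ((hF z).1 h)) (hprod z hz)
  · intro z
    by_cases hz : z ∈ F
    · rw [(hF z).2 hz, Finset.prod_eq_zero hz (sub_self z), mul_zero]
    · simp only [Q, if_neg hz]; rw [div_mul_cancel₀ _ (hprod z hz)]

lemma core {h : S2 → S2} (hc : Continuous h)
    (hsm : ContDiff ℝ 1 (fun z : ℂ => (h (sig z) : E3))) (hinv : ∀ x, h (h x) = x)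
    (hg : Good h) (hN : h NP ≠ NP) : Set.ncard {x | h x = x} = 2 := by
  classical
  have hcs : Continuous fun z => h (sig z) := hc.comp continuous_sig
  let Z : Set ℂ := {z | h (sig z) = sig z}
  have hZc : IsClosed Z := isClosed_eq hcs continuous_sig
  have hlimh : Tendsto (fun z => h (sig z)) (cocompact ℂ) (𝓝 (h NP)) :=
    (hc.tendsto NP).comp tendsto_sig
  let U : Set ℂ := {z | ∀ᶠ w in 𝓝 z, w ∈ Z}
  have hUZ : ∀ z ∈ U, z ∈ Z := fun z hz => Eventually.self_of_nhds hz
  have hU : IsClopen U := by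
    constructor
    · rw [← closure_subset_iff_isClosed]
      intro z hz
      have hzZ : z ∈ Z := closure_minimal hUZ hZc hz
      rcases fixed_dichotomy hc hsm hinv hg hzZ with h1 | ⟨h1, -⟩
      · exact h1
      · obtain ⟨w, hw1, hw2⟩ := mem_closure_iff_nhds.1 hz _ h1
        have : w = z := hw1 (hUZ w hw2)
        exact this ▸ hw2
    · exact isOpen_setOfPred_eventually_nhds
  have hUe : U = ∅ := by
    rcases isClopen_iff.1 hU with h1 | h1
    · exact h1
    · exfalso
      apply hN
      refine tendsto_nhds_unique (hlimh.congr fun z => ?_) tendsto_sig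
      exact hUZ z (h1 ▸ Set.mem_univ z)
  have hiso : ∀ z ∈ Z, (∀ᶠ w in 𝓝 z, w ∈ Z → w = z) ∧
      Tendsto (fun w => (gg h w - w) / (w - z)) (𝓝[≠] z) (𝓝 (-2)) := by
    intro z hz
    rcases fixed_dichotomy hc hsm hinv hg hz with h1 | h1
    · have : z ∈ U := h1
      rw [hUe] at this; exact this.elim
    · exact h1
  have hfin : Z.Finite := by
    obtain ⟨R, hR, hR2⟩ := exists_radius
      ((hlimh.prodMk_nhds tendsto_sig).eventually
        ((isClosed_diagonal (X := S2)).isOpen_compl.mem_nhds (by simpa using hN)))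
    have hsub : Z ⊆ closedBall 0 R := by
      intro z hz
      by_contra hzR
      rw [mem_closedBall_zero_iff, not_le] at hzR
      exact hR2 z hzR.le hz
    by_contra hinf
    have hcpt : IsCompact Z := (isCompact_closedBall (0 : ℂ) R).of_isClosed_subset hZc hsub
    obtain ⟨z, hz, hacc⟩ := Set.Infinite.exists_accPt_of_subset_isCompact hinf hcpt subset_rfl
    rw [accPt_iff_frequently] at hacc
    obtain ⟨w, ⟨hw1, hw2⟩, hw3⟩ := (hacc.and_eventually (hiso z hz).1).exists
    exact hw1 (hw3 hw2)
  obtain ⟨F, hF⟩ := hfin.exists_finset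
  have himg : {x | h x = x} = sig '' (F : Set ℂ) := by
    ext x
    constructor
    · intro hx
      have hx : h x = x := hx
      have hxN : x ≠ NP := fun h => hN (h ▸ hx)
      refine ⟨tau x, ?_, sig_tau hxN⟩
      have : tau x ∈ Z := by change h (sig (tau x)) = sig (tau x); rw [sig_tau hxN, hx]
      exact (hF _).2 this
    · rintro ⟨z, hz, rfl⟩
      exact (hF z).1 hz
  rw [himg, Set.ncard_image_of_injective _ sig_injective, Set.ncard_coe_finset]
  obtain ⟨c0, c1, e0, e1, hc0, hc1, hL, he, heL, ht0, ht1⟩ := exists_data hg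
  let q : ℂ → ℂ := fun z => c1 z - z * c0 z
  have hqc : Continuous q := by fun_prop
  have hqz : ∀ z, q z = 0 ↔ z ∈ F := by
    intro z
    rw [hF]
    constructor
    · intro hz
      exact (hL z).2.eq_sig (hL z).1 (sub_eq_zero.1 hz)
    · intro hz
      have hz : h (sig z) = sig z := hz
      have h1 := (hL z).2
      rw [hz] at h1
      have h2 := tau_of_InL (sig_ne_NP z) h1
      rw [tau_sig] at h2
      simp only [q]; rw [h2]; ring
  have he0 : e0 ≠ 0 := by
    intro h0
    rw [h0] at heL he
    exact hN (eq_NP (fun h => he ⟨rfl, h⟩) heL)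
  have hqd : ∀ a ∈ F, ∃ d, d ≠ 0 ∧ Tendsto (fun z => q z / (z - a)) (𝓝[≠] a) (𝓝 d) := by
    intro a ha
    have haZ : h (sig a) = sig a := (hF a).1 ha
    refine ⟨c0 a * (-2), ?_, ?_⟩
    · refine mul_ne_zero ?_ (by norm_num)
      intro hz
      have h1 := hL a
      rw [hz, haZ] at h1
      exact sig_ne_NP a (eq_NP (fun h => h1.1 ⟨rfl, h⟩) h1.2)
    · have h1 := ((hc0.tendsto a).mono_left nhdsWithin_le_nhds).mul (hiso a haZ).2
      refine h1.congr' ?_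
      filter_upwards [(ev_ne_NP hc haZ).filter_mono nhdsWithin_le_nhds] with w hw
      have h2 := tau_of_InL hw (hL w).2
      simp only [q]
      rw [h2, gg]; ring
  obtain ⟨Q, hQc, hQ0, hQ⟩ := factor_zeros q hqc F hqz hqd
  let b : ℂ → ℂ := fun z => q z / z ^ 2 / (-e0)
  let a : ℂ → ℂ := fun z => ∏ c ∈ F, (1 - c * z⁻¹)
  have ha : Tendsto a (cocompact ℂ) (𝓝 1) := by
    have h1 : Tendsto a (cocompact ℂ) (𝓝 (∏ c ∈ F, (1 - c * 0))) :=
      tendsto_finsetProd _ fun c _ => (tendsto_inv_cc.const_mul c).const_sub 1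
    simpa using h1
  have hb : Tendsto b (cocompact ℂ) (𝓝 1) := by
    have h1 := ((ht1.mul tendsto_inv_cc).sub ht0).div_const (-e0)
    rw [mul_zero, zero_sub, div_self (neg_ne_zero.2 he0)] at h1
    refine h1.congr' ?_
    filter_upwards [ev_ne_zero] with z hz
    simp only [b, q]
    field_simp
  obtain ⟨R, hR, hR2⟩ := exists_radius ((ev_re_pos ha).and (ev_re_pos hb))
  have := winding_zero (fun z => Q z / (-e0)) a b (2 - (F.card : ℤ)) R hR (by fun_prop)
    (fun z => div_ne_zero (hQ0 z) (neg_ne_zero.2 he0)) ?_ ?_ ?_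
  · omega
  · refine continuousOn_finsetProd _ fun c _ => ?_
    exact continuousOn_const.sub (continuousOn_const.mul continuousOn_inv₀)
  · refine (hqc.continuousOn.div (by fun_prop) fun z hz => pow_ne_zero 2 hz).div_const _
  · intro z hz
    have hz0 : z ≠ 0 := by rw [← norm_pos_iff, hz]; exact hR
    refine ⟨(hR2 z hz.ge).1, (hR2 z hz.ge).2, ?_⟩
    have h1 : ∏ c ∈ F, (z - c) = z ^ F.card * a z := by
      simp only [a]
      rw [← Finset.prod_const, ← Finset.prod_mul_distrib]
      refine Finset.prod_congr rfl fun c _ => ?_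
      field_simp
    simp only [b]
    rw [hQ z, h1, zpow_sub₀ hz0, zpow_natCast, zpow_ofNat]
    field_simp


open Metric Manifold

theorem sphere_involution_two_fixed_points
    [Fact (Module.finrank ℝ (EuclideanSpace ℝ (Fin 3)) = 2 + 1)]
    (h : Diffeomorph (𝓡 2) (𝓡 2)
      (sphere (0 : EuclideanSpace ℝ (Fin 3)) 1)
      (sphere (0 : EuclideanSpace ℝ (Fin 3)) 1) 1)
    (hne : ∃ x, h x ≠ x)
    (hinv : ∀ x, h (h x) = x)
    (hor : ContinuousMap.Homotopic ⟨h, h.continuous⟩ (ContinuousMap.id _)) :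
    Set.ncard {x | h x = x} = 2 := by
  obtain ⟨p, hp⟩ := hne
  let L : E3 ≃ₗᵢ[ℝ] E3 := Submodule.reflection (ℝ ∙ ((NP : E3) - p))ᗮ
  have hLN : L NP = p := Submodule.reflection_sub (by
    rw [mem_sphere_zero_iff_norm.1 NP.2, mem_sphere_zero_iff_norm.1 p.2])
  have hLL : ∀ x, L (L x) = x := fun x => Submodule.reflection_reflection _ x
  have hLm : ∀ x : S2, L x ∈ sphere (0 : E3) 1 := fun x => by
    rw [mem_sphere_zero_iff_norm, L.norm_map, mem_sphere_zero_iff_norm.1 x.2]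
  let ρ : C(S2, S2) := ⟨fun x => ⟨L x, hLm x⟩, by
    exact Continuous.subtype_mk (L.continuous.comp continuous_subtype_val) _⟩
  have hρρ : ∀ x, ρ (ρ x) = x := fun x => Subtype.ext (hLL x)
  have hρN : ρ NP = p := Subtype.ext hLN
  have hρp : ρ p = NP := by rw [← hρN, hρρ]
  let hC : C(S2, S2) := ⟨h, h.continuous⟩
  let k : C(S2, S2) := ρ.comp (hC.comp ρ)
  have hk : ∀ x, k x = ρ (h (ρ x)) := fun x => rfl
  have hkor : k.Homotopic (ContinuousMap.id _) := by
    have h1 : k.Homotopic (ρ.comp ((ContinuousMap.id _).comp ρ)) :=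
      (ContinuousMap.Homotopic.refl ρ).comp (hor.comp (ContinuousMap.Homotopic.refl ρ))
    have h2 : ρ.comp ((ContinuousMap.id _).comp ρ) = ContinuousMap.id _ := by
      ext1 x; exact hρρ x
    rwa [h2] at h1
  have hsm : ContDiff ℝ 1 (fun z : ℂ => (k (sig z) : E3)) := by
    have hLs : ContDiff ℝ 1 (fun z : ℂ => L (sigA z)) := L.contDiff.comp contDiff_sigA
    have h1 : ContMDiff 𝓘(ℝ, ℂ) (𝓡 2) 1 (fun z : ℂ => ρ (sig z)) :=
      ContMDiff.codRestrict_sphere (n := 2) hLs.contMDiff (fun z => hLm (sig z))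
    have h2 : ContMDiff 𝓘(ℝ, ℂ) 𝓘(ℝ, E3) 1 (fun z : ℂ => (h (ρ (sig z)) : E3)) :=
      contMDiff_coe_sphere.comp (h.contMDiff.comp h1)
    exact L.contDiff.comp h2.contDiff
  have hmain := core (h := k) k.continuous hsm
    (fun x => by simp only [hk, hρρ, hinv]) (good_of_homotopic k hkor)
    (fun hN => hp (by rw [hk, hρN] at hN; rw [← hρρ (h p), hN, hρN]))
  have himg : {x | h x = x} = ρ '' {x | k x = x} := by
    ext x
    constructor
    · intro hx
      have hx : h x = x := hx
      exact ⟨ρ x, by change k (ρ x) = ρ x; rw [hk, hρρ, hx], hρρ x⟩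
    · rintro ⟨y, hy, rfl⟩
      have hy : k y = y := hy
      change h (ρ y) = ρ y
      rw [hk] at hy
      conv_rhs => rw [← hy, hρρ]
  have hρinj : Function.Injective ρ := fun x y hxy => by rw [← hρρ x, hxy, hρρ]
  rw [himg, Set.ncard_image_of_injective _ hρinj]
  exact hmain
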